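/- Let a sequential qubit strategy achieve the optimal witness pair W_AB = α and W_AC = (4 + √2 + √(16α − 16α² − 2))/8 for some α ∈ [1/2, (2+√2)/4]. Then Alice's states are pairwise antipodal and form a square on a disk of the Bloch sphere: ρ_{00} + ρ_{11} = 𝟙, ρ_{01} + ρ_{10} = 𝟙, and tr[ρ_{00} ρ_{01}] = 1/2. -/

import Mathlib

open Matrix ComplexOrder

noncomputable section

/-- The bit `x_y` of `x = (x₀, x₁)`. -/
def bit (x : Bool × Bool) (y : Bool) : Bool := if y then x.2 else x.1

/-- Alice–Bob witness `W_AB = (1/8) ∑_{x,y} tr[ρ_x K_{x_y|y}† K_{x_y|y}]`. -/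
def WAB (ρ : Bool × Bool → Matrix (Fin 2) (Fin 2) ℂ)
    (K : Bool → Bool → Matrix (Fin 2) (Fin 2) ℂ) : ℝ :=
  (1 / 8) * ∑ x : Bool × Bool, ∑ y : Bool,
    ((ρ x * ((K y (bit x y))ᴴ * K y (bit x y))).trace).re

/-- Alice–Charlie witness
`W_AC = (1/16) ∑_{x,y,b,z} tr[K_{b|y} ρ_x K_{b|y}† C_{x_z|z}]`. -/
def WAC (ρ : Bool × Bool → Matrix (Fin 2) (Fin 2) ℂ)
    (K C : Bool → Bool → Matrix (Fin 2) (Fin 2) ℂ) : ℝ :=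
  (1 / 16) * ∑ x : Bool × Bool, ∑ y : Bool, ∑ b : Bool, ∑ z : Bool,
    ((K y b * ρ x * (K y b)ᴴ * C z (bit x z)).trace).re

/-- A sequential qubit strategy: four qubit states, two instruments (Kraus
operators), and two binary POVMs. -/
def ValidStrategy (ρ : Bool × Bool → Matrix (Fin 2) (Fin 2) ℂ)
    (K C : Bool → Bool → Matrix (Fin 2) (Fin 2) ℂ) : Prop :=
  (∀ x, (ρ x).PosSemidef ∧ (ρ x).trace = 1) ∧
  (∀ y, (K y false)ᴴ * K y false + (K y true)ᴴ * K y true = 1) ∧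
  (∀ z b, (C z b).PosSemidef) ∧
  (∀ z, C z false + C z true = 1)


abbrev M2 := Matrix (Fin 2) (Fin 2) ℂ
abbrev V3 := EuclideanSpace ℝ (Fin 3)

/-- Half the (real) trace. -/
def tr0 (A : M2) : ℝ := ((A 0 0).re + (A 1 1).re) / 2
/-- Bloch-type vector of a Hermitian matrix. -/
def bv (A : M2) : V3 := !₂[(A 0 1).re, (A 0 1).im, ((A 0 0).re - (A 1 1).re) / 2]

lemma herm_entries {A : M2} (h : A.IsHermitian) :
    (A 0 0).im = 0 ∧ (A 1 1).im = 0 ∧ (A 1 0).re = (A 0 1).re ∧ (A 1 0).im = -(A 0 1).im := by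
  have h0 := congrArg Complex.im (h.apply 0 0)
  have h1 := congrArg Complex.im (h.apply 1 1)
  have h2 := congrArg Complex.re (h.apply 1 0)
  have h3 := congrArg Complex.im (h.apply 1 0)
  simp at h0 h1 h2 h3
  refine ⟨by linarith, by linarith, by linarith, by linarith⟩

lemma inner_bv (A B : M2) : inner ℝ (bv A) (bv B) = (A 0 1).re * (B 0 1).re
    + (A 0 1).im * (B 0 1).im
    + (((A 0 0).re - (A 1 1).re) / 2) * (((B 0 0).re - (B 1 1).re) / 2) := by
  simp [bv, PiLp.inner_apply, Fin.sum_univ_three]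
  ring

lemma norm_bv (A : M2) : ‖bv A‖ ^ 2 = (A 0 1).re ^ 2 + (A 0 1).im ^ 2
    + (((A 0 0).re - (A 1 1).re) / 2) ^ 2 := by
  rw [← real_inner_self_eq_norm_sq, inner_bv]; ring

lemma trace_mul_herm {A B : M2} (hA : A.IsHermitian) (hB : B.IsHermitian) :
    (A * B).trace = ((2 * (tr0 A * tr0 B + inner ℝ (bv A) (bv B)) : ℝ) : ℂ) := by
  obtain ⟨a0, a1, a2, a3⟩ := herm_entries hA
  obtain ⟨b0, b1, b2, b3⟩ := herm_entries hB
  rw [inner_bv]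
  apply Complex.ext
  · simp only [Matrix.trace, Matrix.diag, Matrix.mul_apply, Fin.sum_univ_two, Complex.add_re,
      Complex.mul_re, tr0, a0, a1, a2, a3, b0, b1, b2, b3, Complex.ofReal_re]
    ring
  · simp only [Matrix.trace, Matrix.diag, Matrix.mul_apply, Fin.sum_univ_two, Complex.add_im,
      Complex.mul_im, tr0, a0, a1, a2, a3, b0, b1, b2, b3, Complex.ofReal_im]
    ring

lemma det_herm {A : M2} (hA : A.IsHermitian) :
    A.det = ((tr0 A ^ 2 - ‖bv A‖ ^ 2 : ℝ) : ℂ) := by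
  obtain ⟨a0, a1, a2, a3⟩ := herm_entries hA
  rw [norm_bv, Matrix.det_fin_two]
  apply Complex.ext
  · simp only [Complex.sub_re, Complex.mul_re, tr0, a0, a1, a2, a3, Complex.ofReal_re]
    ring
  · simp only [Complex.sub_im, Complex.mul_im, tr0, a0, a1, a2, a3, Complex.ofReal_im]
    ring

lemma tr0_eq (A : M2) : tr0 A = A.trace.re / 2 := by
  simp [tr0, Matrix.trace, Fin.sum_univ_two]

lemma bv_add (A B : M2) : bv (A + B) = bv A + bv B := by
  ext i; fin_cases i <;> simp [bv]; ring
lemma bv_sub (A B : M2) : bv (A - B) = bv A - bv B := by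
  ext i; fin_cases i <;> simp [bv]; ring
lemma tr0_add (A B : M2) : tr0 (A + B) = tr0 A + tr0 B := by
  simp [tr0]; ring
lemma tr0_sub (A B : M2) : tr0 (A - B) = tr0 A - tr0 B := by
  simp [tr0]; ring
lemma bv_one : bv 1 = 0 := by
  ext i; fin_cases i <;> simp [bv]
lemma tr0_one : tr0 1 = 1 := by
  simp [tr0]

lemma psd_bv {A : M2} (h : A.PosSemidef) : ‖bv A‖ ≤ tr0 A := by
  have h1 := h.det_nonneg
  have h2 := h.trace_nonneg
  rw [det_herm h.1] at h1
  have h1' : 0 ≤ tr0 A ^ 2 - ‖bv A‖ ^ 2 := by exact_mod_cast h1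
  have h2' : 0 ≤ tr0 A := by
    rw [tr0_eq]
    have := (Complex.le_def.1 h2).1
    simp at this
    linarith
  exact abs_le_of_sq_le_sq' (by linarith) h2' |>.2

lemma kraus_norm (K D : M2) (hD : D.IsHermitian) (ht : tr0 D = 0) :
    ‖bv (K * D * Kᴴ)‖ ^ 2 = inner ℝ (bv D) (bv (Kᴴ * K)) ^ 2
      + (tr0 (Kᴴ * K) ^ 2 - ‖bv (Kᴴ * K)‖ ^ 2) * ‖bv D‖ ^ 2 := by
  have hM : (Kᴴ * K).IsHermitian := Matrix.isHermitian_conjTranspose_mul_self K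
  have hH : (K * D * Kᴴ).IsHermitian := Matrix.isHermitian_mul_mul_conjTranspose K hD
  have h1 : (K * D * Kᴴ).det = (Kᴴ * K).det * D.det := by
    simp only [Matrix.det_mul]; ring
  rw [det_herm hH, det_herm hM, det_herm hD] at h1
  have h1' : tr0 (K * D * Kᴴ) ^ 2 - ‖bv (K * D * Kᴴ)‖ ^ 2
      = (tr0 (Kᴴ * K) ^ 2 - ‖bv (Kᴴ * K)‖ ^ 2) * (tr0 D ^ 2 - ‖bv D‖ ^ 2) := by
    exact_mod_cast h1
  have h2 : tr0 (K * D * Kᴴ) = inner ℝ (bv D) (bv (Kᴴ * K)) := by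
    rw [tr0_eq, Matrix.mul_assoc, Matrix.trace_mul_comm, Matrix.mul_assoc,
      trace_mul_herm hD hM, Complex.ofReal_re, ht]
    ring
  rw [h2, ht] at h1'
  linarith

/-- disturbance function -/
def gf (b e : V3) : ℝ := Real.sqrt ((1 - ‖b‖ ^ 2) * ‖e‖ ^ 2 + (inner ℝ e b) ^ 2)

lemma scalar_bound (x y t u E k : ℝ) (hk : 0 ≤ k)
    (hE : 0 ≤ E) (htu : t + u = 1)
    (hx2 : x ^ 2 = t ^ 2 * E - k) (hy2 : y ^ 2 = u ^ 2 * E - k) (hk2 : k ≤ t * u * E) :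
    (x + y) ^ 2 ≤ E - 4 * k := by
  have h : x * y ≤ t * u * E - k := by
    apply abs_le_of_sq_le_sq' _ (by linarith) |>.2
    rw [mul_pow, hx2, hy2]
    nlinarith [mul_nonneg (mul_nonneg hk hE) (sq_nonneg (t - u))]
  have : (x + y) ^ 2 = (t ^ 2 + u ^ 2) * E - 2 * k + 2 * (x * y) := by nlinarith
  have h3 : (t ^ 2 + u ^ 2) * E + 2 * (t * u * E) = E := by
    have : (t + u) ^ 2 * E = E := by rw [htu]; ring
    linarith
  linarith

lemma channel_bound (K0 K1 D C : M2) (hK : K0ᴴ * K0 + K1ᴴ * K1 = 1) (hD : D.IsHermitian)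
    (ht : tr0 D = 0) (hC : C.IsHermitian) (hc : ‖bv C‖ ≤ 1 / 2) :
    ((K0 * D * K0ᴴ * C).trace).re + ((K1 * D * K1ᴴ * C).trace).re
      ≤ gf ((2 : ℝ) • bv (K0ᴴ * K0)) (bv D) := by
  have hM0 : (K0ᴴ * K0).PosSemidef := Matrix.posSemidef_conjTranspose_mul_self K0
  have hM1 : (K1ᴴ * K1).PosSemidef := Matrix.posSemidef_conjTranspose_mul_self K1
  have p0 := psd_bv hM0
  have p1 := psd_bv hM1
  have hb : bv (K1ᴴ * K1) = - bv (K0ᴴ * K0) := by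
    have := congrArg bv hK
    rw [bv_add, bv_one] at this
    exact (neg_eq_of_add_eq_zero_right this).symm
  have htt : tr0 (K0ᴴ * K0) + tr0 (K1ᴴ * K1) = 1 := by
    rw [← tr0_add, hK, tr0_one]
  have n0 := kraus_norm K0 D hD ht
  have n1 := kraus_norm K1 D hD ht
  have hH0 : (K0 * D * K0ᴴ).IsHermitian := Matrix.isHermitian_mul_mul_conjTranspose K0 hD
  have hH1 : (K1 * D * K1ᴴ).IsHermitian := Matrix.isHermitian_mul_mul_conjTranspose K1 hD
  have hsum : tr0 (K0 * D * K0ᴴ) + tr0 (K1 * D * K1ᴴ) = 0 := by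
    have e : ∀ K : M2, (K * D * Kᴴ).trace = (D * (Kᴴ * K)).trace := fun K => by
      rw [Matrix.mul_assoc, Matrix.trace_mul_comm, Matrix.mul_assoc]
    rw [tr0_eq, tr0_eq, e, e, ← add_div, ← Complex.add_re, ← Matrix.trace_add, ← Matrix.mul_add,
      hK, Matrix.mul_one, ← tr0_eq, ht]
  rw [trace_mul_herm hH0 hC, trace_mul_herm hH1 hC, Complex.ofReal_re, Complex.ofReal_re]
  rw [hb, norm_neg] at p1 n1
  rw [inner_neg_right] at n1
  generalize bv (K0ᴴ * K0) = m at *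
  generalize tr0 (K0ᴴ * K0) = t at *
  generalize tr0 (K1ᴴ * K1) = u at *
  generalize bv D = e at *
  generalize bv (K0 * D * K0ᴴ) = x at *
  generalize bv (K1 * D * K1ᴴ) = y at *
  generalize bv C = c at *
  have hx : inner ℝ x c ≤ ‖x‖ * (1 / 2) :=
    (real_inner_le_norm x c).trans (by gcongr)
  have hy : inner ℝ y c ≤ ‖y‖ * (1 / 2) :=
    (real_inner_le_norm y c).trans (by gcongr)
  have hm := norm_nonneg m
  have hcs : inner ℝ e m ^ 2 ≤ ‖m‖ ^ 2 * ‖e‖ ^ 2 := by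
    rw [← mul_pow, ← sq_abs]
    gcongr
    rw [mul_comm]; exact abs_real_inner_le_norm e m
  have key := scalar_bound ‖x‖ ‖y‖ t u (‖e‖ ^ 2) (‖m‖ ^ 2 * ‖e‖ ^ 2 - inner ℝ e m ^ 2)
    (by linarith) (sq_nonneg _) htt
    (by linarith) (by linarith) (by
      have : ‖m‖ ^ 2 ≤ t * u := by rw [sq]; gcongr; linarith
      nlinarith [mul_le_mul_of_nonneg_right this (sq_nonneg ‖e‖), sq_nonneg (inner ℝ e m)])
  have key2 : ‖x‖ + ‖y‖ ≤ gf ((2 : ℝ) • m) e := by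
    apply Real.le_sqrt_of_sq_le
    rw [norm_smul, inner_smul_right, Real.norm_eq_abs, abs_of_pos (by norm_num : (0 : ℝ) < 2)]
    linarith
  have : tr0 (K0 * D * K0ᴴ) * tr0 C + tr0 (K1 * D * K1ᴴ) * tr0 C = 0 := by
    rw [← add_mul, hsum, zero_mul]
  linarith

lemma gf_le (b e : V3) : gf b e ≤ ‖e‖ := by
  apply Real.sqrt_le_iff.2 ⟨norm_nonneg _, ?_⟩
  have hcs : inner ℝ e b ^ 2 ≤ ‖b‖ ^ 2 * ‖e‖ ^ 2 := by
    rw [← mul_pow, ← sq_abs]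
    gcongr
    rw [mul_comm]; exact abs_real_inner_le_norm e b
  linarith

lemma cross_aux (b e f : V3) (hb : ‖b‖ ≤ 1) (η s σ : ℝ) (hη : 0 ≤ η)
    (hσ : σ ^ 2 = 1) (hσ2 : σ * inner ℝ e f = |inner ℝ e f|) (hf : f ≠ 0) :
    η * inner ℝ e b + s * gf b f ≤ ‖η • e + (s * σ) • f‖ := by
  have hL : 0 < ‖f‖ := norm_pos_iff.2 hf
  set L := ‖f‖ with hLdef
  set q : ℝ := inner ℝ f b with hq
  set δ : ℝ := inner ℝ e f with hδ
  set p : ℝ := inner ℝ e b with hp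
  have hb2 : ‖b‖ ^ 2 ≤ 1 := by nlinarith [norm_nonneg b]
  have hn0 : 0 ≤ 1 - ‖b‖ ^ 2 + (q / L) ^ 2 := by nlinarith [sq_nonneg (q / L)]
  set n := Real.sqrt (1 - ‖b‖ ^ 2 + (q / L) ^ 2) with hn
  have hnn : 0 ≤ n := Real.sqrt_nonneg _
  have hn2 : n ^ 2 = 1 - ‖b‖ ^ 2 + (q / L) ^ 2 := Real.sq_sqrt hn0
  have hg : gf b f = L * n := by
    unfold gf
    rw [← Real.sqrt_sq (mul_nonneg hL.le hnn), mul_pow, hn2]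
    congr 1
    field_simp
    ring
  have hqn : |q / L| ≤ n := Real.abs_le_sqrt (by linarith)
  set k := σ * n / L - q / L ^ 2 with hk
  have hff : inner ℝ f f = L ^ 2 := real_inner_self_eq_norm_sq f
  have hw : ‖b + k • f‖ ^ 2 = 1 := by
    rw [norm_add_sq_real, inner_smul_right, norm_smul, mul_pow, Real.norm_eq_abs, sq_abs,
      real_inner_comm, ← hq, ← hLdef]
    have h1 : k * q = σ * n * (q / L) - (q / L) ^ 2 := by rw [hk]; field_simp
    have h2 : k ^ 2 * L ^ 2 = (σ * n - q / L) ^ 2 := by rw [hk]; field_simp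
    rw [h1, h2]
    have h3 : (σ * n) ^ 2 = n ^ 2 := by rw [mul_pow, hσ, one_mul]
    linarith
  have hw1 : ‖b + k • f‖ = 1 := by
    nlinarith [norm_nonneg (b + k • f)]
  have hin : inner ℝ (η • e + (s * σ) • f) (b + k • f)
      = η * p + η * (k * δ) + s * (L * n) := by
    simp only [inner_add_left, inner_add_right, real_inner_smul_left, inner_smul_right, hff,
      ← hq, ← hδ, ← hp]
    have h1 : k * L ^ 2 = σ * n * L - q := by rw [hk]; field_simp
    linear_combination s * σ * h1 + s * n * L * hσ
  have hkd : 0 ≤ k * δ := by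
    have h1 : k * δ = (n * |δ| - (q / L) * δ) / L := by
      rw [hk, ← hσ2]; field_simp
    rw [h1]
    apply div_nonneg _ hL.le
    have h2 : (q / L) * δ ≤ |q / L| * |δ| := by rw [← abs_mul]; exact le_abs_self _
    have h3 : |q / L| * |δ| ≤ n * |δ| := by gcongr
    linarith
  have hle := real_inner_le_norm (η • e + (s * σ) • f) (b + k • f)
  rw [hin, hw1, mul_one] at hle
  rw [hg]
  nlinarith [mul_nonneg hη hkd]

lemma cross_bound (b e f : V3) (hb : ‖b‖ ≤ 1) (η s : ℝ) (hη : 0 ≤ η) (hs : 0 ≤ s) :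
    (η * inner ℝ e b + s * gf b f) ^ 2
      ≤ η ^ 2 * ‖e‖ ^ 2 + s ^ 2 * ‖f‖ ^ 2 + 2 * s * η * |inner ℝ e f| := by
  by_cases hf : f = 0
  · subst hf
    have : gf b 0 = 0 := by simp [gf]
    rw [this]
    simp only [inner_zero_right, norm_zero, abs_zero]
    have h1 : |inner ℝ e b| ≤ ‖e‖ :=
      (abs_real_inner_le_norm e b).trans (mul_le_of_le_one_right (norm_nonneg e) hb)
    have h2 : inner ℝ e b ^ 2 ≤ ‖e‖ ^ 2 := by rw [← sq_abs]; gcongr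
    nlinarith [mul_le_mul_of_nonneg_left h2 (sq_nonneg η)]
  · obtain ⟨σ, hσ, hσ2⟩ : ∃ σ : ℝ, σ ^ 2 = 1 ∧ σ * inner ℝ e f = |inner ℝ e f| := by
      rcases abs_cases (inner ℝ e f : ℝ) with h | h
      · exact ⟨1, by norm_num, by rw [h.1, one_mul]⟩
      · exact ⟨-1, by norm_num, by rw [h.1]; ring⟩
    have a1 := cross_aux b e f hb η s σ hη hσ hσ2 hf
    have a2 := cross_aux (-b) e f (by rwa [norm_neg]) η s σ hη hσ hσ2 hf
    have hg : gf (-b) f = gf b f := by simp [gf]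
    have hg0 : 0 ≤ gf b f := Real.sqrt_nonneg _
    rw [hg, inner_neg_right] at a2
    have hN : ‖η • e + (s * σ) • f‖ ^ 2
        = η ^ 2 * ‖e‖ ^ 2 + s ^ 2 * ‖f‖ ^ 2 + 2 * s * η * |inner ℝ e f| := by
      rw [norm_add_sq_real, real_inner_smul_left, inner_smul_right, norm_smul, norm_smul, mul_pow,
        mul_pow, Real.norm_eq_abs, Real.norm_eq_abs, sq_abs, sq_abs, ← hσ2, mul_pow, hσ]
      ring
    rw [← hN]
    apply sq_le_sq'
    · nlinarith [mul_nonneg hs hg0]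
    · exact a1

lemma final_bound (e0 e1 b0 b1 : V3) (hb0 : ‖b0‖ ≤ 1) (hb1 : ‖b1‖ ≤ 1)
    (hp : ‖e0 + e1‖ ≤ 2) (hm : ‖e0 - e1‖ ≤ 2) (η s : ℝ) (hη : 0 ≤ η) (hs : 0 ≤ s)
    (hηs : η ^ 2 + s ^ 2 = 1)
    (hB : inner ℝ e0 b0 + inner ℝ e1 b1 = 2 * Real.sqrt 2 * η)
    (hC : 2 * Real.sqrt 2 * (1 + s) ≤ gf b0 e0 + gf b0 e1 + gf b1 e0 + gf b1 e1) :
    ‖e0‖ ^ 2 = 2 ∧ ‖e1‖ ^ 2 = 2 ∧ inner ℝ e0 e1 = 0 := by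
  have r2 : Real.sqrt 2 ^ 2 = 2 := Real.sq_sqrt (by norm_num)
  have r0 : 0 ≤ Real.sqrt 2 := Real.sqrt_nonneg 2
  have hp2 : ‖e0‖ ^ 2 + 2 * inner ℝ e0 e1 + ‖e1‖ ^ 2 ≤ 4 := by
    rw [← norm_add_sq_real]; nlinarith [norm_nonneg (e0 + e1)]
  have hm2 : ‖e0‖ ^ 2 - 2 * inner ℝ e0 e1 + ‖e1‖ ^ 2 ≤ 4 := by
    rw [← norm_sub_sq_real]; nlinarith [norm_nonneg (e0 - e1)]
  have n0 := norm_nonneg e0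
  have n1 := norm_nonneg e1
  have main : 2 * Real.sqrt 2 ≤ ‖e0‖ + ‖e1‖ := by
    rcases hs.eq_or_lt with h | hspos
    · have hη1 : η = 1 := by
        subst h
        nlinarith
      have i0 : inner ℝ e0 b0 ≤ ‖e0‖ :=
        (real_inner_le_norm e0 b0).trans (mul_le_of_le_one_right n0 hb0)
      have i1 : inner ℝ e1 b1 ≤ ‖e1‖ :=
        (real_inner_le_norm e1 b1).trans (mul_le_of_le_one_right n1 hb1)
      rw [hη1] at hB
      linarith
    · have g0 := gf_le b0 e0
      have g1 := gf_le b1 e1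
      have c0 := cross_bound b0 e0 e1 hb0 η s hη hs
      have c1 := cross_bound b1 e1 e0 hb1 η s hη hs
      rw [real_inner_comm e0 e1] at c1
      set X := η * inner ℝ e0 b0 + s * gf b0 e1
      set Y := η * inner ℝ e1 b1 + s * gf b1 e0
      have hXY : X + Y = η * (2 * Real.sqrt 2 * η) + s * (gf b0 e1 + gf b1 e0) := by
        rw [← hB]; ring
      have habs : ‖e0‖ ^ 2 + ‖e1‖ ^ 2 + 2 * |inner ℝ e0 e1| ≤ 4 := by
        rcases abs_cases (inner ℝ e0 e1 : ℝ) with h | h <;> linarith [h.1]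
      have h2 : 2 * s * η ≤ 1 := by nlinarith [sq_nonneg (s - η)]
      have h3 : 2 * s * η * |inner ℝ e0 e1| ≤ 1 * |inner ℝ e0 e1| :=
        mul_le_mul_of_nonneg_right h2 (abs_nonneg _)
      have h4 : X ^ 2 + Y ^ 2 ≤ 4 := by
        have : X ^ 2 + Y ^ 2 ≤ (η ^ 2 + s ^ 2) * (‖e0‖ ^ 2 + ‖e1‖ ^ 2)
          + 2 * (2 * s * η * |inner ℝ e0 e1|) := by
          linarith
        rw [hηs] at this
        linarith
      have h5 : X + Y ≤ 2 * Real.sqrt 2 := by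
        apply abs_le_of_sq_le_sq' _ (by positivity) |>.2
        nlinarith [sq_nonneg (X - Y)]
      have h6 : s * (2 * Real.sqrt 2) ≤ s * (‖e0‖ + ‖e1‖) := by
        have h7 : s * (2 * Real.sqrt 2 * (1 + s)) ≤
            s * (‖e0‖ + ‖e1‖ + (gf b0 e1 + gf b1 e0)) :=
          mul_le_mul_of_nonneg_left (by linarith) hs
        have h8 : 2 * Real.sqrt 2 * (η ^ 2 + s ^ 2) = 2 * Real.sqrt 2 := by rw [hηs, mul_one]
        linarith
      exact le_of_mul_le_mul_left h6 hspos
  have hsq : 8 ≤ (‖e0‖ + ‖e1‖) ^ 2 := by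
    have : (2 * Real.sqrt 2) ^ 2 ≤ (‖e0‖ + ‖e1‖) ^ 2 := by gcongr
    linarith [this, r2, mul_pow 2 (Real.sqrt 2) 2]
  have hd : (‖e0‖ - ‖e1‖) ^ 2 ≤ 0 := by linarith
  have hde : ‖e0‖ = ‖e1‖ := by
    have : ‖e0‖ - ‖e1‖ = 0 := by
      apply pow_eq_zero_iff (two_ne_zero) |>.1
      exact le_antisymm hd (sq_nonneg _)
    linarith
  rw [hde] at hsq hp2 hm2 ⊢
  refine ⟨by linarith, by linarith, by linarith⟩

lemma antipodal (r q : V3) (hr : ‖r‖ ≤ 1 / 2) (hq : ‖q‖ ≤ 1 / 2) (h : 1 ≤ ‖r - q‖ ^ 2) :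
    r + q = 0 := by
  have := parallelogram_law_with_norm ℝ r q
  have h0 : ‖r + q‖ = 0 := by
    have h1 := norm_nonneg r
    have h2 := norm_nonneg q
    nlinarith [norm_nonneg (r + q)]
  exact norm_eq_zero.1 h0

lemma herm_one_of {A : M2} (hA : A.IsHermitian) (ht : tr0 A = 1) (hb : bv A = 0) : A = 1 := by
  obtain ⟨a0, a1, a2, a3⟩ := herm_entries hA
  have h := norm_bv A
  rw [hb] at h
  simp only [norm_zero] at h
  unfold tr0 at ht
  have k1 : (A 0 1).re = 0 := by nlinarith
  have k2 : (A 0 1).im = 0 := by nlinarith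
  have k3 : ((A 0 0).re - (A 1 1).re) / 2 = 0 := by nlinarith
  ext i j
  fin_cases i <;> fin_cases j <;> apply Complex.ext <;> simp <;> linarith

/-- difference operator for bit `z` -/
def Dz (ρ : Bool × Bool → M2) (z : Bool) : M2 :=
  if z then ρ (false, false) - ρ (false, true) + ρ (true, false) - ρ (true, true)
  else ρ (false, false) + ρ (false, true) - ρ (true, false) - ρ (true, true)

lemma pres (K0 K1 R C Ct : M2) (hK : K0ᴴ * K0 + K1ᴴ * K1 = 1) (hC : C + Ct = 1)
    (hR : R.trace = 1) :
    ((K0 * R * K0ᴴ * Ct).trace).re + ((K1 * R * K1ᴴ * Ct).trace).re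
    = 1 - ((K0 * R * K0ᴴ * C).trace).re - ((K1 * R * K1ᴴ * C).trace).re := by
  have e : ∀ K : M2, (K * R * Kᴴ).trace = (R * (Kᴴ * K)).trace := fun K => by
    rw [Matrix.mul_assoc, Matrix.trace_mul_comm, Matrix.mul_assoc]
  have h1 : ((K0 * R * K0ᴴ).trace).re + ((K1 * R * K1ᴴ).trace).re = 1 := by
    rw [e, e, ← Complex.add_re, ← Matrix.trace_add, ← Matrix.mul_add, hK, Matrix.mul_one, hR]
    simp
  have h2 : Ct = 1 - C := by rw [← hC]; abel
  rw [h2]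
  simp only [Matrix.mul_sub, Matrix.mul_one, Matrix.trace_sub, Complex.sub_re]
  linarith

lemma WAC_eq (ρ : Bool × Bool → M2) (K C : Bool → Bool → M2) (hv : ValidStrategy ρ K C) :
    WAC ρ K C = 1 / 2 + (1 / 16) * ∑ y : Bool, ∑ z : Bool,
      (((K y false * Dz ρ z * (K y false)ᴴ * C z false).trace).re
        + ((K y true * Dz ρ z * (K y true)ᴴ * C z false).trace).re) := by
  obtain ⟨h1, h2, h3, h4⟩ := hv
  have P := fun x y z => pres (K y false) (K y true) (ρ x) (C z false) (C z true)
    (h2 y) (h4 z) (h1 x).2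
  simp only [WAC, Fintype.sum_prod_type, Fintype.sum_bool, bit, Dz, Matrix.mul_add, Matrix.mul_sub,
    Matrix.add_mul, Matrix.sub_mul, Matrix.trace_add, Matrix.trace_sub, Complex.add_re,
    Complex.sub_re, if_true, if_false, Bool.false_eq_true]
  have a1 := P (true, true) true true
  have a2 := P (true, true) true false
  have a3 := P (true, true) false true
  have a4 := P (true, true) false false
  have a5 := P (true, false) true false
  have a6 := P (true, false) false false
  have a7 := P (false, true) true true
  have a8 := P (false, true) false true
  linarith

lemma WAB_eq (ρ : Bool × Bool → M2) (K C : Bool → Bool → M2) (hv : ValidStrategy ρ K C) :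
    WAB ρ K = 1 / 2 + (1 / 8) * ∑ y : Bool,
      ((Dz ρ y * ((K y false)ᴴ * K y false)).trace).re := by
  obtain ⟨h1, h2, h3, h4⟩ := hv
  have P : ∀ x y, ((ρ x * ((K y true)ᴴ * K y true)).trace).re
      = 1 - ((ρ x * ((K y false)ᴴ * K y false)).trace).re := fun x y => by
    have : (K y true)ᴴ * K y true = 1 - (K y false)ᴴ * K y false := by rw [← h2 y]; abel
    rw [this, Matrix.mul_sub, Matrix.mul_one, Matrix.trace_sub, (h1 x).2]
    simp
  simp only [WAB, Fintype.sum_prod_type, Fintype.sum_bool, bit, Dz,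
    Matrix.add_mul, Matrix.sub_mul, Matrix.trace_add, Matrix.trace_sub, Complex.add_re,
    Complex.sub_re, if_true, if_false, Bool.false_eq_true, P]
  ring

/-- Result 2 (geometry of Alice's states): a strategy achieving the optimal
witness pair has pairwise antipodal preparations forming a square on a disk
of the Bloch sphere. -/
theorem selftest_states_square
    (ρ : Bool × Bool → Matrix (Fin 2) (Fin 2) ℂ)
    (K C : Bool → Bool → Matrix (Fin 2) (Fin 2) ℂ)
    (hvalid : ValidStrategy ρ K C)
    (α : ℝ) (hα : α ∈ Set.Icc (1 / 2 : ℝ) ((2 + Real.sqrt 2) / 4))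
    (hAB : WAB ρ K = α)
    (hAC : WAC ρ K C = (4 + Real.sqrt 2 + Real.sqrt (16 * α - 16 * α ^ 2 - 2)) / 8) :
    ρ (false, false) + ρ (true, true) = 1 ∧
    ρ (false, true) + ρ (true, false) = 1 ∧
    (ρ (false, false) * ρ (false, true)).trace = 1 / 2 := by
  obtain ⟨h1, h2, h3, h4⟩ := id hvalid
  have hH : ∀ x, (ρ x).IsHermitian := fun x => (h1 x).1.1
  have ht : ∀ x, tr0 (ρ x) = 1 / 2 := fun x => by rw [tr0_eq, (h1 x).2]; simp
  have hr : ∀ x, ‖bv (ρ x)‖ ≤ 1 / 2 := fun x => (psd_bv (h1 x).1).trans (ht x).le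
  have hDH : ∀ z, (Dz ρ z).IsHermitian := fun z => by
    cases z
    · exact (((hH _).add (hH _)).sub (hH _)).sub (hH _)
    · exact (((hH _).sub (hH _)).add (hH _)).sub (hH _)
  have hDt : ∀ z, tr0 (Dz ρ z) = 0 := fun z => by
    cases z <;> simp only [Dz, if_true, if_false, Bool.false_eq_true, tr0_add, tr0_sub, ht] <;>
      norm_num
  -- effects have Bloch vector of length at most one half
  have eff : ∀ A B : M2, A.PosSemidef → B.PosSemidef → A + B = 1 → ‖bv A‖ ≤ 1 / 2 := by
    intro A B hA hB hAB
    have pA := psd_bv hA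
    have pB := psd_bv hB
    have hb : bv B = - bv A := by
      have := congrArg bv hAB
      rw [bv_add, bv_one] at this
      exact (neg_eq_of_add_eq_zero_right this).symm
    have htt : tr0 A + tr0 B = 1 := by rw [← tr0_add, hAB, tr0_one]
    rw [hb, norm_neg] at pB
    linarith
  have hMp : ∀ y b, ((K y b)ᴴ * K y b).PosSemidef :=
    fun y b => Matrix.posSemidef_conjTranspose_mul_self _
  have hm : ∀ y, ‖(2 : ℝ) • bv ((K y false)ᴴ * K y false)‖ ≤ 1 := fun y => by
    have := eff _ _ (hMp y false) (hMp y true) (h2 y)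
    rw [norm_smul, Real.norm_eq_abs, abs_of_pos (by norm_num : (0 : ℝ) < 2)]
    linarith
  have hch := fun y z => channel_bound (K y false) (K y true) (Dz ρ z) (C z false) (h2 y) (hDH z)
    (hDt z) (h3 z false).1 (eff _ _ (h3 z false) (h3 z true) (h4 z))
  rw [WAC_eq ρ K C hvalid] at hAC
  rw [WAB_eq ρ K C hvalid] at hAB
  have hAB' : ∀ y, ((Dz ρ y * ((K y false)ᴴ * K y false)).trace).re
      = inner ℝ (bv (Dz ρ y)) ((2 : ℝ) • bv ((K y false)ᴴ * K y false)) := fun y => by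
    rw [trace_mul_herm (hDH y) (hMp y false).1, Complex.ofReal_re, hDt, inner_smul_right]
    ring
  simp only [Fintype.sum_bool, hAB'] at hAB hAC
  have hplus : bv (Dz ρ false) + bv (Dz ρ true)
      = (2 : ℝ) • (bv (ρ (false, false)) - bv (ρ (true, true))) := by
    simp only [Dz, if_true, if_false, Bool.false_eq_true, bv_add, bv_sub]
    module
  have hminus : bv (Dz ρ false) - bv (Dz ρ true)
      = (2 : ℝ) • (bv (ρ (false, true)) - bv (ρ (true, false))) := by
    simp only [Dz, if_true, if_false, Bool.false_eq_true, bv_add, bv_sub]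
    module
  have hsub : ∀ x w, ‖(2 : ℝ) • (bv (ρ x) - bv (ρ w))‖ ≤ 2 := fun x w => by
    rw [norm_smul, Real.norm_eq_abs, abs_of_pos (by norm_num : (0 : ℝ) < 2)]
    linarith [norm_sub_le (bv (ρ x)) (bv (ρ w)), hr x, hr w]
  have r2 : Real.sqrt 2 ^ 2 = 2 := Real.sq_sqrt (by norm_num)
  have r0 : 0 ≤ Real.sqrt 2 := Real.sqrt_nonneg 2
  obtain ⟨hα1, hα2⟩ := hα
  have hη0 : 0 ≤ Real.sqrt 2 * (2 * α - 1) := mul_nonneg r0 (by linarith)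
  have hη1 : Real.sqrt 2 * (2 * α - 1) ≤ 1 := by nlinarith
  have hηsq : 0 ≤ 1 - (Real.sqrt 2 * (2 * α - 1)) ^ 2 := by nlinarith
  have hss : Real.sqrt (16 * α - 16 * α ^ 2 - 2)
      = Real.sqrt 2 * Real.sqrt (1 - (Real.sqrt 2 * (2 * α - 1)) ^ 2) := by
    rw [← Real.sqrt_mul (by norm_num), mul_pow, r2]
    congr 1; ring
  rw [hss] at hAC
  obtain ⟨f0, f1, f2⟩ := final_bound (bv (Dz ρ false)) (bv (Dz ρ true)) _ _ (hm false) (hm true)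
    (by rw [hplus]; exact hsub _ _) (by rw [hminus]; exact hsub _ _)
    (Real.sqrt 2 * (2 * α - 1)) (Real.sqrt (1 - (Real.sqrt 2 * (2 * α - 1)) ^ 2))
    hη0 (Real.sqrt_nonneg _) (by rw [Real.sq_sqrt hηsq]; ring)
    (by nlinarith) (by
      have a := hch false false
      have b := hch false true
      have c := hch true false
      have d := hch true true
      linarith)
  have np := norm_add_sq_real (bv (Dz ρ false)) (bv (Dz ρ true))
  have nm := norm_sub_sq_real (bv (Dz ρ false)) (bv (Dz ρ true))
  rw [hplus, norm_smul, mul_pow, f0, f1, f2] at np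
  rw [hminus, norm_smul, mul_pow, f0, f1, f2] at nm
  norm_num at np nm
  have A1 := antipodal _ _ (hr (false, false)) (hr (true, true)) (by rcases np with h | h <;> rw [h] <;> norm_num)
  have A2 := antipodal _ _ (hr (false, true)) (hr (true, false)) (by rcases nm with h | h <;> rw [h] <;> norm_num)
  refine ⟨herm_one_of ((hH _).add (hH _)) (by rw [tr0_add, ht, ht]; norm_num)
      (by rw [bv_add]; exact A1),
    herm_one_of ((hH _).add (hH _)) (by rw [tr0_add, ht, ht]; norm_num)
      (by rw [bv_add]; exact A2), ?_⟩
  have q1 : bv (ρ (true, true)) = - bv (ρ (false, false)) :=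
    (neg_eq_of_add_eq_zero_right A1).symm
  have q2 : bv (ρ (true, false)) = - bv (ρ (false, true)) :=
    (neg_eq_of_add_eq_zero_right A2).symm
  have z0 : bv (Dz ρ false) = (2 : ℝ) • (bv (ρ (false, false)) + bv (ρ (false, true))) := by
    simp only [Dz, if_false, Bool.false_eq_true, bv_add, bv_sub, q1, q2]
    module
  have z1 : bv (Dz ρ true) = (2 : ℝ) • (bv (ρ (false, false)) - bv (ρ (false, true))) := by
    simp only [Dz, if_true, bv_add, bv_sub, q1, q2]
    module
  rw [z0, norm_smul, mul_pow, norm_add_sq_real] at f0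
  rw [z1, norm_smul, mul_pow, norm_sub_sq_real] at f1
  norm_num at f0 f1
  have hin : inner ℝ (bv (ρ (false, false))) (bv (ρ (false, true))) = 0 := by linarith
  rw [trace_mul_herm (hH _) (hH _), hin, ht, ht]
  norm_num

end
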